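/- Let G be a graph, S a label assignment on G, and N a nonnegative integer. Let P = R_{≤N} be the set of vertices having a relevant label at most N, and let P̄ be the set obtained from P by deleting both endpoints of every edge of G whose two endpoints have equal relevant labels. Then the subgraph of G induced by P̄ is acyclic (a forest). -/

import Mathlib

open MeasureTheory ProbabilityTheory Filter Set

namespace InducedForest

variable {V : Type*}

/-- Label `i` is *relevant* for vertex `v` (w.r.t. the label assignment `S`):
either `i = 0` and `0 ∈ S v`, or `i ∈ S v`, no `j < i` is relevant for `v`, and
there is a unique neighbour of `v` having a relevant label strictly smaller than `i`. -/
def Relevant (G : SimpleGraph V) (S : V → Set ℕ) (i : ℕ) : V → Prop :=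
  Nat.strongRecOn i (fun i ih v =>
    (i = 0 ∧ 0 ∈ S v) ∨
    (i ∈ S v ∧ (∀ j, (h : j < i) → ¬ ih j h v) ∧
      (∃! u, G.Adj v u ∧ ∃ j, ∃ h : j < i, ih j h u)))

/-- `v` has some relevant label `≤ l`, i.e. `v ∈ R_{≤ l}`. -/
def RelevantLe (G : SimpleGraph V) (S : V → Set ℕ) (l : ℕ) (v : V) : Prop :=
  ∃ i ≤ l, Relevant G S i v

inductive Colour | white | blue | orange | purple
deriving DecidableEq

open Classical in
/-- The colour of `u` at time `l`. -/
noncomputable def colourAt (G : SimpleGraph V) (S : V → Set ℕ) (l : ℕ) (u : V) : Colour :=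
  if RelevantLe G S l u then Colour.purple
  else if ∀ v, G.Adj u v → ¬ RelevantLe G S l v then Colour.white
  else if ∃! v, G.Adj u v ∧ RelevantLe G S l v then Colour.blue
  else Colour.orange

/-- The set `W_l` of white vertices at time `l`. -/
def White (G : SimpleGraph V) (S : V → Set ℕ) (l : ℕ) : Set V :=
  {u | ¬ RelevantLe G S l u ∧ ∀ v, G.Adj u v → ¬ RelevantLe G S l v}

/-- The set `B_l` of blue vertices at time `l`. -/
def Blue (G : SimpleGraph V) (S : V → Set ℕ) (l : ℕ) : Set V :=
  {u | ¬ RelevantLe G S l u ∧ ∃! v, G.Adj u v ∧ RelevantLe G S l v}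
/-- The set `P̄`: vertices with a relevant label `≤ N`, with both endpoints of every edge
whose two endpoints have equal relevant labels deleted. -/
def Pbar (G : SimpleGraph V) (S : V → Set ℕ) (N : ℕ) : Set V :=
  {v | RelevantLe G S N v ∧
    ∀ x, G.Adj v x → ∀ i, Relevant G S i v → ¬ Relevant G S i x}

theorem relevant_iff (G : SimpleGraph V) (S : V → Set ℕ) (i : ℕ) (v : V) :
    Relevant G S i v ↔ ((i = 0 ∧ 0 ∈ S v) ∨
      (i ∈ S v ∧ (∀ j, j < i → ¬ Relevant G S j v) ∧
        (∃! u, G.Adj v u ∧ ∃ j, ∃ _ : j < i, Relevant G S j u))) := by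
  unfold Relevant
  rw [Nat.strongRecOn_eq]

/-- In a cycle, a vertex of maximal label has two distinct lower neighbours. -/
theorem acyclic_of_label {W : Type*} (H : SimpleGraph W) (f : W → ℕ)
    (hf : ∀ v a b, H.Adj v a → H.Adj v b → f a ≤ f v → f b ≤ f v → a = b) :
    H.IsAcyclic := by
  classical
  intro v c hc
  obtain ⟨m, hm, hmax⟩ := c.support.toFinset.exists_max_image f ⟨v, by simp⟩
  rw [List.mem_toFinset] at hm
  have hr := hc.rotate hm
  have hle : ∀ x ∈ (c.rotate m hm).support, f x ≤ f m := by
    intro x hx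
    apply hmax
    rw [List.mem_toFinset]
    exact (SimpleGraph.Walk.mem_support_rotate_iff c m hm).1 hx
  have hnil := hr.not_nil
  exact hr.snd_ne_penultimate
    (hf m _ _ (SimpleGraph.Walk.adj_snd hnil) (SimpleGraph.Walk.adj_penultimate hnil).symm
      (hle _ (SimpleGraph.Walk.getVert_mem_support _ _))
      (hle _ (SimpleGraph.Walk.getVert_mem_support _ _)))

/-- The subgraph induced by `P̄` is acyclic. -/
theorem pbar_induces_forest
    (G : SimpleGraph V) (S : V → Set ℕ) (N : ℕ) :
    (G.induce (Pbar G S N)).IsAcyclic := by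
  choose f _ hf using fun v : Pbar G S N => v.2.1
  apply acyclic_of_label _ f
  intro v a b ha hb hfa hfb
  rw [SimpleGraph.induce_adj] at ha hb
  have key : ∀ x : Pbar G S N, G.Adj v x → f x ≤ f v → f x < f v := by
    intro x hx hle
    refine lt_of_le_of_ne hle fun h => ?_
    have hx' := hf x
    rw [h] at hx'
    exact v.2.2 x hx _ (hf v) hx'
  have h1 := key a ha hfa
  have h2 := key b hb hfb
  rcases (relevant_iff G S _ _).1 (hf v) with h | ⟨_, _, h⟩
  · omega
  · exact Subtype.ext (h.unique ⟨ha, _, h1, hf a⟩ ⟨hb, _, h2, hf b⟩)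

end InducedForest
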